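/- arXiv:1811.05970 — 2 statements merged into one kernel-verified Lean document; each statement's English description precedes it below -/
import Mathlib

section
/- For a transient weighted graph G, the capacity of a finite set A satisfies the variational formula cap(A) = (inf_μ Σ_{x,y∈A} g(x,y) μ(x) μ(y))^{−1}, where the infimum ranges over probability measures μ supported on A. Consequently cap is monotone: A ⊂ B implies cap(A) ≤ cap(B). -/
open scoped ENNReal

open Classical in
noncomputable def nstep {V : Type*} (p : V → V → ℝ) : ℕ → V → V → ℝ
  | 0, x, y => if x = y then 1 else 0
  | n + 1, x, y => ∑' z, nstep p n x z * p z y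

noncomputable def green {V : Type*} (p : V → V → ℝ) (lam : V → ℝ) (x y : V) : ℝ :=
  (1 / lam y) * ∑' n, nstep p n x y

open Classical in
noncomputable def killedKernel {V : Type*} (p : V → V → ℝ) (U : Set V) (x y : V) : ℝ :=
  if x ∈ U ∧ y ∈ U then p x y else 0

noncomputable def killedGreen {V : Type*} (p : V → V → ℝ) (lam : V → ℝ) (U : Set V) (x y : V) : ℝ :=
  (1 / lam y) * ∑' n, nstep (killedKernel p U) n x y

open Classical in
noncomputable def hitProb {V : Type*} (p : V → V → ℝ) (A : Set V) (x : V) : ℝ :=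
  ∑' n : ℕ, ∑' y : V, if y ∈ A then nstep (fun a b => if a ∈ A then 0 else p a b) n x y else 0

open Classical in
noncomputable def eqMeasure {V : Type*} (p : V → V → ℝ) (lam : V → ℝ) (A : Set V) (x : V) : ℝ :=
  if x ∈ A then lam x * (1 - ∑' y, p x y * hitProb p A y) else 0

noncomputable def capaE {V : Type*} (p : V → V → ℝ) (lam : V → ℝ) (A : Set V) : ℝ≥0∞ :=
  ∑' x : V, Set.indicator A (fun v => ENNReal.ofReal (eqMeasure p lam A v)) x


namespace CapVar

lemma nstep_succ {V : Type*} (N : V → Finset V) (hN : ∀ x y, y ∈ N x → x ∈ N y)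
    (k : V → V → ℝ) (hk : ∀ x y, y ∉ N x → k x y = 0) (n : ℕ) (x y : V) :
    nstep k (n + 1) x y = ∑ z ∈ N y, nstep k n x z * k z y := by
  rw [nstep]
  refine tsum_eq_sum ?_
  intro z hz
  rw [hk z y (fun h => hz (hN _ _ h)), mul_zero]

lemma nstep_succ' {V : Type*} (N : V → Finset V) (hN : ∀ x y, y ∈ N x → x ∈ N y)
    (k : V → V → ℝ) (hk : ∀ x y, y ∉ N x → k x y = 0) (n : ℕ) :
    ∀ x y : V, nstep k (n + 1) x y = ∑ z ∈ N x, k x z * nstep k n z y := by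
  classical
  induction n with
  | zero =>
    intro x y
    rw [nstep_succ N hN k hk]
    simp only [nstep, ite_mul, mul_ite, one_mul, mul_one, zero_mul, mul_zero,
      Finset.sum_ite_eq, Finset.sum_ite_eq']
    by_cases h : y ∈ N x
    · simp [h, hN _ _ h]
    · simp [h, hk x y h]
  | succ n ih =>
    intro x y
    rw [nstep_succ N hN k hk]
    have h1 : ∀ z, nstep k (n + 1) x z * k z y =
        ∑ u ∈ N x, k x u * (nstep k n u z * k z y) := fun z => by
      rw [ih, Finset.sum_mul]
      exact Finset.sum_congr rfl fun u _ => mul_assoc _ _ _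
    rw [Finset.sum_congr rfl fun z _ => h1 z, Finset.sum_comm]
    refine Finset.sum_congr rfl fun u _ => ?_
    rw [nstep_succ N hN k hk n, Finset.mul_sum]

lemma nstep_nonneg {V : Type*} (k : V → V → ℝ) (hk : ∀ x y, 0 ≤ k x y) (n : ℕ) :
    ∀ x y : V, 0 ≤ nstep k n x y := by
  induction n with
  | zero => intro x y; simp only [nstep]; split_ifs <;> norm_num
  | succ n ih => intro x y; rw [nstep]; exact tsum_nonneg fun z => mul_nonneg (ih _ _) (hk _ _)

lemma nstep_mono {V : Type*} (N : V → Finset V) (hN : ∀ x y, y ∈ N x → x ∈ N y)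
    (k l : V → V → ℝ) (hl : ∀ x y, y ∉ N x → l x y = 0) (hk0 : ∀ x y, 0 ≤ k x y)
    (hkl : ∀ x y, k x y ≤ l x y) (n : ℕ) :
    ∀ x y : V, nstep k n x y ≤ nstep l n x y := by
  have hk : ∀ x y, y ∉ N x → k x y = 0 := fun x y h =>
    le_antisymm ((hkl x y).trans (hl x y h).le) (hk0 x y)
  induction n with
  | zero => intro x y; simp only [nstep]; exact le_rfl
  | succ n ih =>
    intro x y
    rw [nstep_succ N hN k hk, nstep_succ N hN l hl]
    exact Finset.sum_le_sum fun z _ => mul_le_mul (ih _ _) (hkl _ _) (hk0 _ _)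
      ((nstep_nonneg k hk0 n _ _).trans (ih _ _))

structure Ctx {V : Type*} (N : V → Finset V) (w : V → V → ℝ) (lam : V → ℝ) (p : V → V → ℝ) :
    Prop where
  hN : ∀ x y, y ∈ N x → x ∈ N y
  wsymm : ∀ x y, w x y = w y x
  wnn : ∀ x y, 0 ≤ w x y
  w0 : ∀ x y, y ∉ N x → w x y = 0
  hlam : ∀ x, lam x = ∑ y ∈ N x, w x y
  lampos : ∀ x, 0 < lam x
  hp : ∀ x y, p x y = w x y / lam x
  hs : ∀ x y, Summable (fun n => nstep p n x y)

section
variable {V : Type*} {N : V → Finset V} {w : V → V → ℝ} {lam : V → ℝ} {p : V → V → ℝ}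

lemma Ctx.p0 (C : Ctx N w lam p) (x y : V) (h : y ∉ N x) : p x y = 0 := by
  rw [C.hp, C.w0 x y h, zero_div]

lemma Ctx.pnn (C : Ctx N w lam p) (x y : V) : 0 ≤ p x y := by
  rw [C.hp]; exact div_nonneg (C.wnn _ _) (C.lampos _).le

lemma Ctx.lamp (C : Ctx N w lam p) (x y : V) : lam x * p x y = w x y := by
  rw [C.hp, mul_div_cancel₀ _ (C.lampos x).ne']

lemma Ctx.psum (C : Ctx N w lam p) (x : V) : ∑ y ∈ N x, p x y = 1 := by
  simp_rw [C.hp]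
  rw [← Finset.sum_div, ← C.hlam, div_self (C.lampos x).ne']

lemma Ctx.rev (C : Ctx N w lam p) (n : ℕ) :
    ∀ x y, lam x * nstep p n x y = lam y * nstep p n y x := by
  induction n with
  | zero =>
    intro x y
    simp only [nstep]
    by_cases h : x = y
    · subst h; rfl
    · simp [h, Ne.symm h]
  | succ n ih =>
    intro x y
    rw [nstep_succ N C.hN p C.p0, nstep_succ' N C.hN p C.p0, Finset.mul_sum, Finset.mul_sum]
    refine Finset.sum_congr rfl fun z _ => ?_
    rw [← mul_assoc, ih x z, ← mul_assoc, C.lamp y z, C.wsymm y z, ← C.lamp z y]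
    ring

/-! quadratic form -/

/-- transition operator -/
noncomputable def op (N : V → Finset V) (p : V → V → ℝ) (f : V → ℝ) (x : V) : ℝ :=
  ∑ z ∈ N x, p x z * f z

lemma Ctx.op_iter (C : Ctx N w lam p) (A : Finset V) (φ : V → ℝ) (hφ : ∀ x, x ∉ A → φ x = 0)
    (n : ℕ) : ∀ x, ((op N p)^[n] φ) x = ∑ y ∈ A, nstep p n x y * φ y := by
  classical
  induction n with
  | zero =>
    intro x
    simp only [Function.iterate_zero, id, nstep, ite_mul, one_mul, zero_mul, Finset.sum_ite_eq]
    by_cases h : x ∈ A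
    · simp [h]
    · simp [h, hφ x h]
  | succ n ih =>
    intro x
    rw [Function.iterate_succ_apply', op]
    simp_rw [ih, nstep_succ' N C.hN p C.p0, Finset.mul_sum, Finset.sum_mul]
    rw [Finset.sum_comm]
    simp_rw [mul_assoc]

lemma Ctx.op_supp (C : Ctx N w lam p) (f : V → ℝ) (B : Finset V) (hf : ∀ x, x ∉ B → f x = 0) :
    ∃ B' : Finset V, ∀ x, x ∉ B' → op N p f x = 0 := by
  classical
  refine ⟨B.biUnion N, fun x hx => Finset.sum_eq_zero fun z hz => ?_⟩
  rw [hf z, mul_zero]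
  intro hzB
  exact hx (Finset.mem_biUnion.2 ⟨z, hzB, C.hN _ _ hz⟩)

lemma Ctx.op_iter_supp (C : Ctx N w lam p) (f : V → ℝ) (B : Finset V)
    (hf : ∀ x, x ∉ B → f x = 0) (n : ℕ) :
    ∃ B' : Finset V, ∀ x, x ∉ B' → ((op N p)^[n] f) x = 0 := by
  induction n with
  | zero => exact ⟨B, hf⟩
  | succ n ih =>
    obtain ⟨B', hB'⟩ := ih
    rw [Function.iterate_succ']
    exact C.op_supp _ B' hB'

lemma Ctx.lam_op (C : Ctx N w lam p) (B : Finset V) (f : V → ℝ) (hf : ∀ x, x ∉ B → f x = 0)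
    (x : V) : lam x * op N p f x = ∑ z ∈ B, w x z * f z := by
  classical
  rw [op, Finset.mul_sum]
  simp_rw [← mul_assoc, C.lamp]
  have h1 : ∑ z ∈ N x, w x z * f z = ∑ z ∈ N x ∪ B, w x z * f z :=
    Finset.sum_subset Finset.subset_union_left fun z _ h => by rw [C.w0 x z h, zero_mul]
  have h2 : ∑ z ∈ B, w x z * f z = ∑ z ∈ N x ∪ B, w x z * f z :=
    Finset.sum_subset Finset.subset_union_right fun z _ h => by rw [hf z h, mul_zero]
  rw [h1, h2]

lemma Ctx.op_adj (C : Ctx N w lam p) (B : Finset V) (f g : V → ℝ) (hf : ∀ x, x ∉ B → f x = 0)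
    (hg : ∀ x, x ∉ B → g x = 0) :
    ∑ x ∈ B, lam x * op N p f x * g x = ∑ x ∈ B, lam x * f x * op N p g x := by
  have : ∀ x, lam x * f x * op N p g x = f x * (lam x * op N p g x) := fun x => by ring
  simp_rw [this, C.lam_op B f hf, C.lam_op B g hg, Finset.sum_mul, Finset.mul_sum]
  rw [Finset.sum_comm]
  refine Finset.sum_congr rfl fun x _ => Finset.sum_congr rfl fun y _ => ?_
  rw [C.wsymm y x]; ring

lemma Ctx.op_pos (C : Ctx N w lam p) (B : Finset V) (f : V → ℝ) (hf : ∀ x, x ∉ B → f x = 0) :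
    0 ≤ ∑ x ∈ B, lam x * f x * f x + ∑ x ∈ B, lam x * f x * op N p f x := by
  classical
  have e : ∀ x, lam x * f x * op N p f x = f x * (lam x * op N p f x) := fun x => by ring
  simp_rw [e, C.lam_op B f hf, Finset.mul_sum]
  have hle : ∀ x, ∑ z ∈ B, w x z ≤ lam x := fun x => by
    rw [C.hlam]
    have h1 : ∑ z ∈ N x, w x z = ∑ z ∈ N x ∪ B, w x z :=
      Finset.sum_subset Finset.subset_union_left fun z _ h => C.w0 x z h
    rw [h1]
    exact Finset.sum_le_sum_of_subset_of_nonneg Finset.subset_union_right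
      fun z _ _ => C.wnn x z
  have h1 : ∑ x ∈ B, ∑ z ∈ B, w x z * (f x * f x) ≤ ∑ x ∈ B, lam x * f x * f x := by
    refine Finset.sum_le_sum fun x _ => ?_
    rw [← Finset.sum_mul, mul_assoc]
    exact mul_le_mul_of_nonneg_right (hle x) (mul_self_nonneg _)
  have h2 : ∑ x ∈ B, ∑ z ∈ B, w x z * (f z * f z) = ∑ x ∈ B, ∑ z ∈ B, w x z * (f x * f x) := by
    rw [Finset.sum_comm]
    refine Finset.sum_congr rfl fun x _ => Finset.sum_congr rfl fun y _ => ?_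
    rw [C.wsymm y x]
  have h3 : 0 ≤ ∑ x ∈ B, ∑ z ∈ B, w x z * ((f x + f z) * (f x + f z)) :=
    Finset.sum_nonneg fun x _ => Finset.sum_nonneg fun z _ =>
      mul_nonneg (C.wnn _ _) (mul_self_nonneg _)
  have h4 : ∑ x ∈ B, ∑ z ∈ B, w x z * ((f x + f z) * (f x + f z)) =
      ∑ x ∈ B, ∑ z ∈ B, w x z * (f x * f x) + ∑ x ∈ B, ∑ z ∈ B, w x z * (f z * f z)
      + 2 * ∑ x ∈ B, ∑ z ∈ B, f x * (w x z * f z) := by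
    simp_rw [Finset.mul_sum, ← Finset.sum_add_distrib]
    refine Finset.sum_congr rfl fun x _ => Finset.sum_congr rfl fun y _ => ?_
    ring
  linarith

lemma Ctx.T_pos (C : Ctx N w lam p) (A : Finset V) (φ : V → ℝ) (hφ : ∀ x, x ∉ A → φ x = 0)
    (k : ℕ) :
    0 ≤ ∑ x ∈ A, lam x * φ x * ((op N p)^[2 * k] φ) x
      + ∑ x ∈ A, lam x * φ x * ((op N p)^[2 * k + 1] φ) x := by
  classical
  choose S hS using C.op_iter_supp φ A hφ
  set B := A ∪ (Finset.range (2 * k + 2)).biUnion S with hB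
  have hsup : ∀ j, j < 2 * k + 2 → ∀ x, x ∉ B → ((op N p)^[j] φ) x = 0 := by
    intro j hj x hx
    refine hS j x fun h => hx ?_
    exact Finset.mem_union_right _ (Finset.mem_biUnion.2 ⟨j, Finset.mem_range.2 hj, h⟩)
  have hAB : ∀ f : V → ℝ, ∑ x ∈ A, lam x * φ x * f x = ∑ x ∈ B, lam x * φ x * f x := fun f =>
    Finset.sum_subset Finset.subset_union_left fun x _ h => by rw [hφ x h]; ring
  have key : ∀ i j, i + j < 2 * k + 2 →
      ∑ x ∈ B, lam x * ((op N p)^[i] φ) x * ((op N p)^[j] φ) x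
        = ∑ x ∈ B, lam x * φ x * ((op N p)^[i + j] φ) x := by
    intro i
    induction i with
    | zero => intro j _; simp
    | succ i ih =>
      intro j hj
      have := ih (j + 1) (by omega)
      rw [Function.iterate_succ' (op N p) i]
      simp only [Function.comp]
      rw [C.op_adj B _ _ (hsup i (by omega)) (hsup j (by omega))]
      rw [Function.iterate_succ' (op N p) j] at this
      simp only [Function.comp] at this
      rw [this, show i + (j + 1) = i + 1 + j by ring]
  rw [hAB, hAB]
  have h1 := key k k (by omega)
  have h2 := key k (k + 1) (by omega)
  have := C.op_pos B _ (hsup k (by omega))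
  rw [Function.iterate_succ' (op N p) k] at h2
  simp only [Function.comp] at h2
  rw [h1, h2] at this
  rw [show 2 * k + 1 = k + (k + 1) by ring, show 2 * k = k + k by ring]
  exact this

lemma Ctx.green_psd (C : Ctx N w lam p) (A : Finset V) (f : V → ℝ) :
    0 ≤ ∑ x ∈ A, ∑ y ∈ A, green p lam x y * f x * f y := by
  classical
  set φ : V → ℝ := fun x => if x ∈ A then f x / lam x else 0 with hφd
  have hφ : ∀ x, x ∉ A → φ x = 0 := fun x h => by simp [hφd, h]
  have hfφ : ∀ x ∈ A, f x = lam x * φ x := fun x h => by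
    simp only [hφd, h, if_true]; rw [mul_div_cancel₀ _ (C.lampos x).ne']
  set T : ℕ → ℝ := fun n => ∑ x ∈ A, lam x * φ x * ((op N p)^[n] φ) x with hT
  have hsum : HasSum T (∑ x ∈ A, ∑ y ∈ A, green p lam x y * f x * f y) := by
    have : T = fun n => ∑ x ∈ A, ∑ y ∈ A, lam x * φ x * φ y * nstep p n x y := by
      funext n
      simp only [hT, C.op_iter A φ hφ, Finset.mul_sum]
      refine Finset.sum_congr rfl fun x _ => Finset.sum_congr rfl fun y _ => ?_
      ring
    rw [this]
    refine hasSum_sum fun x hx => hasSum_sum fun y hy => ?_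
    have h := (C.hs x y).hasSum.mul_left (lam x * φ x * φ y)
    have hy' := (C.lampos y).ne'
    have he : green p lam x y * f x * f y
        = lam x * φ x * φ y * ∑' n, nstep p n x y := by
      rw [green, hfφ x hx, hfφ y hy]
      field_simp
    rw [he]
    exact h
  have ht := hsum.tendsto_sum_nat.comp
    (Filter.tendsto_id.const_mul_atTop' (show 0 < 2 by norm_num) : Filter.Tendsto (fun n : ℕ => 2 * n) Filter.atTop Filter.atTop)
  refine ge_of_tendsto' ht fun n => ?_
  simp only [Function.comp]
  induction n with
  | zero => simp
  | succ n ih =>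
    rw [show 2 * (n + 1) = 2 * n + 1 + 1 by ring, Finset.sum_range_succ, Finset.sum_range_succ]
    have := C.T_pos A φ hφ n
    simp only [hT] at this ih ⊢
    linarith

lemma Ctx.green_symm (C : Ctx N w lam p) (x y : V) : green p lam x y = green p lam y x := by
  have h : lam x * ∑' n, nstep p n x y = lam y * ∑' n, nstep p n y x := by
    rw [← tsum_mul_left, ← tsum_mul_left]
    exact tsum_congr fun n => C.rev n x y
  rw [green, green]
  have := (C.lampos y).ne'
  have := (C.lampos x).ne'
  field_simp
  linarith

/-! hitting probabilities -/

open Classical in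
/-- walk killed on leaving from A -/
noncomputable def q (p : V → V → ℝ) (A : Set V) : V → V → ℝ :=
  fun a b => if a ∈ A then 0 else p a b

/-- probability of hitting at time n -/
noncomputable def hitAt (p : V → V → ℝ) (A : Finset V) (n : ℕ) (x : V) : ℝ :=
  ∑ y ∈ A, nstep (q p (A : Set V)) n x y

lemma hitProb_eq (A : Finset V) (x : V) : hitProb p (A : Set V) x = ∑' n, hitAt p A n x := by
  classical
  rw [hitProb]
  refine tsum_congr fun n => ?_
  rw [hitAt, tsum_eq_sum (s := A)]
  · refine Finset.sum_congr rfl fun y hy => ?_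
    rw [if_pos (by simpa using hy)]
    rfl
  · intro y hy
    rw [if_neg (by simpa using hy)]

lemma Ctx.q0 (C : Ctx N w lam p) (A : Set V) (x y : V) (h : y ∉ N x) : q p A x y = 0 := by
  rw [q, C.p0 x y h, ite_self]

lemma Ctx.qnn (C : Ctx N w lam p) (A : Set V) (x y : V) : 0 ≤ q p A x y := by
  rw [q]; split_ifs
  · exact le_rfl
  · exact C.pnn x y

lemma Ctx.qle (C : Ctx N w lam p) (A : Set V) (x y : V) : q p A x y ≤ p x y := by
  rw [q]; split_ifs
  · exact C.pnn x y
  · exact le_rfl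

lemma Ctx.hitAt_nn (C : Ctx N w lam p) (A : Finset V) (n : ℕ) (x : V) : 0 ≤ hitAt p A n x :=
  Finset.sum_nonneg fun _ _ => nstep_nonneg _ (C.qnn _) _ _ _

lemma Ctx.hitAt_le (C : Ctx N w lam p) (A : Finset V) (n : ℕ) (x : V) :
    hitAt p A n x ≤ ∑ y ∈ A, nstep p n x y :=
  Finset.sum_le_sum fun _ _ => nstep_mono N C.hN _ _ C.p0 (C.qnn _) (C.qle _) _ _ _

lemma Ctx.hitAt_summable (C : Ctx N w lam p) (A : Finset V) (x : V) :
    Summable fun n => hitAt p A n x :=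
  Summable.of_nonneg_of_le (fun n => C.hitAt_nn A n x) (fun n => C.hitAt_le A n x)
    (summable_sum fun y _ => C.hs x y)

lemma hitAt_zero (A : Finset V) (x : V) [Decidable (x ∈ A)] :
    hitAt p A 0 x = if x ∈ A then 1 else 0 := by
  classical
  simp only [hitAt, nstep, Finset.sum_ite_eq]
  congr

lemma Ctx.hitAt_succ_mem (C : Ctx N w lam p) (A : Finset V) (n : ℕ) (x : V) (hx : x ∈ A) :
    hitAt p A (n + 1) x = 0 := by
  refine Finset.sum_eq_zero fun y _ => ?_
  rw [nstep_succ' N C.hN _ (C.q0 _)]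
  refine Finset.sum_eq_zero fun z _ => ?_
  rw [q, if_pos (by simpa using hx), zero_mul]

lemma Ctx.hitAt_succ (C : Ctx N w lam p) (A : Finset V) (n : ℕ) (x : V) (hx : x ∉ A) :
    hitAt p A (n + 1) x = ∑ z ∈ N x, p x z * hitAt p A n z := by
  simp_rw [hitAt, nstep_succ' N C.hN _ (C.q0 _), Finset.mul_sum]
  rw [Finset.sum_comm]
  refine Finset.sum_congr rfl fun z _ => Finset.sum_congr rfl fun y _ => ?_
  congr 1
  rw [q, if_neg (by simpa using hx)]

lemma Ctx.hit_mem (C : Ctx N w lam p) (A : Finset V) (x : V) (hx : x ∈ A) :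
    hitProb p (A : Set V) x = 1 := by
  classical
  rw [hitProb_eq, (C.hitAt_summable A x).tsum_eq_zero_add, hitAt_zero, if_pos hx]
  simp [C.hitAt_succ_mem A _ x hx]

lemma Ctx.hit_not_mem (C : Ctx N w lam p) (A : Finset V) (x : V) (hx : x ∉ A) :
    hitProb p (A : Set V) x = op N p (hitProb p (A : Set V)) x := by
  classical
  rw [hitProb_eq, (C.hitAt_summable A x).tsum_eq_zero_add, hitAt_zero, if_neg hx, op]
  simp_rw [C.hitAt_succ A _ x hx, hitProb_eq, zero_add, ← tsum_mul_left]
  exact Summable.tsum_finsetSum fun z _ => (C.hitAt_summable A z).mul_left _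

lemma Ctx.hit_nn (C : Ctx N w lam p) (A : Finset V) (x : V) : 0 ≤ hitProb p (A : Set V) x := by
  rw [hitProb_eq]; exact tsum_nonneg fun n => C.hitAt_nn A n x

lemma Ctx.hit_le_one (C : Ctx N w lam p) (A : Finset V) (x : V) :
    hitProb p (A : Set V) x ≤ 1 := by
  classical
  rw [hitProb_eq]
  refine Real.tsum_le_of_sum_range_le (fun n => C.hitAt_nn A n x) fun n => ?_
  induction n generalizing x with
  | zero => simp
  | succ n ih =>
    rw [Finset.sum_range_succ', hitAt_zero]
    by_cases hx : x ∈ A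
    · simp [hx, C.hitAt_succ_mem A _ x hx]
    · simp_rw [if_neg hx, C.hitAt_succ A _ x hx, add_zero]
      rw [Finset.sum_comm]
      simp_rw [← Finset.mul_sum]
      calc _ ≤ ∑ z ∈ N x, p x z * 1 :=
            Finset.sum_le_sum fun z _ => mul_le_mul_of_nonneg_left (ih z) (C.pnn x z)
        _ = 1 := by simp_rw [mul_one]; exact C.psum x

lemma Ctx.eq_mem (C : Ctx N w lam p) (A : Finset V) (x : V) (hx : x ∈ A) :
    eqMeasure p lam (A : Set V) x = lam x * (1 - op N p (hitProb p (A : Set V)) x) := by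
  rw [eqMeasure, if_pos (by simpa using hx), op, tsum_eq_sum (s := N x)]
  intro y hy
  rw [C.p0 x y hy, zero_mul]

lemma Ctx.eq_nn (C : Ctx N w lam p) (A : Finset V) (x : V) (hx : x ∈ A) :
    0 ≤ eqMeasure p lam (A : Set V) x := by
  rw [C.eq_mem A x hx]
  refine mul_nonneg (C.lampos x).le (sub_nonneg.2 ?_)
  calc op N p (hitProb p (A : Set V)) x ≤ ∑ z ∈ N x, p x z * 1 :=
        Finset.sum_le_sum fun z _ => mul_le_mul_of_nonneg_left (C.hit_le_one A z) (C.pnn x z)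
    _ = 1 := by simp_rw [mul_one]; exact C.psum x

lemma Ctx.op_mono (C : Ctx N w lam p) {f g : V → ℝ} (h : ∀ x, f x ≤ g x) (n : ℕ) :
    ∀ x, ((op N p)^[n] f) x ≤ ((op N p)^[n] g) x := by
  induction n with
  | zero => exact h
  | succ n ih =>
    intro x
    simp only [Function.iterate_succ', Function.comp, op]
    exact Finset.sum_le_sum fun z _ => mul_le_mul_of_nonneg_left (ih z) (C.pnn x z)

lemma op_zero (n : ℕ) : (op N p)^[n] (fun _ => 0) = fun _ => 0 := by
  induction n with
  | zero => rfl
  | succ n ih =>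
    rw [Function.iterate_succ', Function.comp, ih]
    funext x; simp [op]

lemma Ctx.op_tail (C : Ctx N w lam p) (A : Finset V) (n : ℕ) :
    ∀ x, ((op N p)^[n] (fun x => ∑' m, ∑ y ∈ A, nstep p m x y)) x
      = ∑' m, ∑ y ∈ A, nstep p (m + n) x y := by
  have hs : ∀ x n, Summable fun m => ∑ y ∈ A, nstep p (m + n) x y := fun x n =>
    summable_sum fun y _ => (summable_nat_add_iff n).2 (C.hs x y)
  induction n with
  | zero => intro x; rfl
  | succ n ih =>
    intro x
    simp only [Function.iterate_succ', Function.comp, op]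
    simp_rw [ih, ← tsum_mul_left]
    rw [← Summable.tsum_finsetSum fun z _ => (hs z n).mul_left _]
    refine tsum_congr fun m => ?_
    simp_rw [← add_assoc, nstep_succ' N C.hN p C.p0, Finset.mul_sum]
    exact Finset.sum_comm

lemma Ctx.op_hit_tendsto (C : Ctx N w lam p) (A : Finset V) (x : V) :
    Filter.Tendsto (fun n => ((op N p)^[n] (hitProb p (A : Set V))) x) Filter.atTop (nhds 0) := by
  have h1 : Filter.Tendsto (fun n => ((op N p)^[n] (fun x => ∑' m, ∑ y ∈ A, nstep p m x y)) x)
      Filter.atTop (nhds 0) := by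
    simp_rw [C.op_tail A]
    exact tendsto_sum_nat_add fun m => ∑ y ∈ A, nstep p m x y
  refine squeeze_zero (fun n => ?_) (fun n => ?_) h1
  · have := C.op_mono (C.hit_nn A) n x
    rwa [op_zero] at this
  · refine C.op_mono (fun z => ?_) n x
    rw [hitProb_eq]
    exact (C.hitAt_summable A z).tsum_le_tsum (fun m => C.hitAt_le A m z)
      (summable_sum fun y _ => C.hs z y)

lemma op_sub (f g : V → ℝ) : op N p (fun x => f x - g x) = fun x => op N p f x - op N p g x := by
  funext x
  simp [op, mul_sub]

lemma op_iter_sub (f g : V → ℝ) (n : ℕ) :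
    (op N p)^[n] (fun x => f x - g x) = fun x => ((op N p)^[n] f) x - ((op N p)^[n] g) x := by
  induction n with
  | zero => rfl
  | succ n ih =>
    simp only [Function.iterate_succ', Function.comp, ih, op_sub]

lemma Ctx.green_eq (C : Ctx N w lam p) (A : Finset V) (x : V) (hx : x ∈ A) :
    ∑ y ∈ A, green p lam x y * eqMeasure p lam (A : Set V) y = 1 := by
  set h := hitProb p (A : Set V) with hh
  set φ : V → ℝ := fun x => h x - op N p h x with hφd
  have hφ : ∀ x, x ∉ A → φ x = 0 := fun x hx => by
    simp only [hφd]; rw [sub_eq_zero]; exact C.hit_not_mem A x hx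
  have he : ∀ y ∈ A, eqMeasure p lam (A : Set V) y = lam y * φ y := fun y hy => by
    rw [C.eq_mem A y hy, hφd]; simp only [hh]; rw [C.hit_mem A y hy]
  have hsum : HasSum (fun n => ((op N p)^[n] φ) x)
      (∑ y ∈ A, green p lam x y * eqMeasure p lam (A : Set V) y) := by
    simp_rw [C.op_iter A φ hφ]
    refine hasSum_sum fun y hy => ?_
    have hy' := (C.lampos y).ne'
    have he' : green p lam x y * eqMeasure p lam (A : Set V) y
        = (∑' n, nstep p n x y) * φ y := by
      rw [green, he y hy]
      field_simp
    rw [he']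
    exact (C.hs x y).hasSum.mul_right (φ y)
  have ht : Filter.Tendsto (fun n => ∑ i ∈ Finset.range n, ((op N p)^[i] φ) x) Filter.atTop
      (nhds (1 - 0)) := by
    have : ∀ n, ∑ i ∈ Finset.range n, ((op N p)^[i] φ) x = 1 - ((op N p)^[n] h) x := by
      intro n
      induction n with
      | zero => simp [hh, C.hit_mem A x hx]
      | succ n ih =>
        rw [Finset.sum_range_succ, ih, hφd, op_iter_sub]
        simp only [Function.iterate_succ, Function.comp]
        ring
    simp_rw [this]
    exact (C.op_hit_tendsto A x).const_sub 1
  rw [sub_zero] at ht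
  exact tendsto_nhds_unique hsum.tendsto_sum_nat ht

/-- set of energies -/
def energies (p : V → V → ℝ) (lam : V → ℝ) (A : Finset V) : Set ℝ :=
  {E : ℝ | ∃ μ : V → ℝ, (∀ x, 0 ≤ μ x) ∧ (∀ x, x ∉ A → μ x = 0) ∧
            (∑ x ∈ A, μ x = 1) ∧
            E = ∑ x ∈ A, ∑ y ∈ A, green p lam x y * μ x * μ y}

lemma Ctx.cap_pos (C : Ctx N w lam p) (A : Finset V) (hA : A.Nonempty) :
    0 < ∑ x ∈ A, eqMeasure p lam (A : Set V) x := by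
  refine lt_of_le_of_ne (Finset.sum_nonneg fun x hx => C.eq_nn A x hx) fun h => ?_
  have h0 := (Finset.sum_eq_zero_iff_of_nonneg fun x hx => C.eq_nn A x hx).1 h.symm
  obtain ⟨x, hx⟩ := hA
  have := C.green_eq A x hx
  rw [Finset.sum_eq_zero fun y hy => by rw [h0 y hy, mul_zero]] at this
  exact zero_ne_one this

lemma Ctx.isLeast (C : Ctx N w lam p) (A : Finset V) (hA : A.Nonempty) :
    IsLeast (energies p lam A) (∑ x ∈ A, eqMeasure p lam (A : Set V) x)⁻¹ := by
  classical
  have hc := C.cap_pos A hA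
  set e := eqMeasure p lam (A : Set V) with hedef
  set c := ∑ x ∈ A, e x with hcd
  have hcross : ∀ μ : V → ℝ, ∑ x ∈ A, μ x = 1 →
      ∑ x ∈ A, ∑ y ∈ A, green p lam x y * μ x * (e y / c) = c⁻¹ := by
    intro μ hμ
    have : ∀ x ∈ A, ∑ y ∈ A, green p lam x y * μ x * (e y / c) = μ x * c⁻¹ := by
      intro x hx
      have h1 := C.green_eq A x hx
      calc _ = μ x * c⁻¹ * ∑ y ∈ A, green p lam x y * e y := by
            rw [Finset.mul_sum]
            refine Finset.sum_congr rfl fun y _ => ?_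
            rw [div_eq_mul_inv]; ring
        _ = _ := by rw [h1, mul_one]
    rw [Finset.sum_congr rfl this, ← Finset.sum_mul, hμ, one_mul]
  have hν1 : ∑ x ∈ A, e x / c = 1 := by rw [← Finset.sum_div, div_self hc.ne']
  constructor
  · refine ⟨fun x => e x / c, fun x => ?_, fun x hx => ?_, hν1, ?_⟩
    · by_cases hx : x ∈ A
      · exact div_nonneg (C.eq_nn A x hx) hc.le
      · simp [hedef, eqMeasure, hx]
    · simp [hedef, eqMeasure, hx]
    · exact (hcross (fun x => e x / c) hν1).symm
  · rintro E ⟨μ, -, -, hμ1, rfl⟩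
    have hpsd := C.green_psd A (fun x => μ x - e x / c)
    have h1 := hcross μ hμ1
    have h2 := hcross (fun x => e x / c) hν1
    have h3 : ∑ x ∈ A, ∑ y ∈ A, green p lam x y * (e x / c) * μ y = c⁻¹ := by
      rw [← h1, Finset.sum_comm]
      refine Finset.sum_congr rfl fun x _ => Finset.sum_congr rfl fun y _ => ?_
      rw [C.green_symm y x]; ring
    have h4 : ∑ x ∈ A, ∑ y ∈ A, green p lam x y * (μ x - e x / c) * (μ y - e y / c) =
        ∑ x ∈ A, ∑ y ∈ A, green p lam x y * μ x * μ y
        - ∑ x ∈ A, ∑ y ∈ A, green p lam x y * μ x * (e y / c)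
        - ∑ x ∈ A, ∑ y ∈ A, green p lam x y * (e x / c) * μ y
        + ∑ x ∈ A, ∑ y ∈ A, green p lam x y * (e x / c) * (e y / c) := by
      simp_rw [← Finset.sum_sub_distrib, ← Finset.sum_add_distrib]
      refine Finset.sum_congr rfl fun x _ => Finset.sum_congr rfl fun y _ => ?_
      ring
    linarith

lemma Ctx.main (C : Ctx N w lam p) (A : Finset V) :
    ∑ x ∈ A, eqMeasure p lam (A : Set V) x = (sInf (energies p lam A))⁻¹ := by
  rcases A.eq_empty_or_nonempty with rfl | hA
  · simp [energies]
  · rw [(C.isLeast A hA).csInf_eq, inv_inv]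

lemma energies_mono (A B : Finset V) (h : A ⊆ B) : energies p lam A ⊆ energies p lam B := by
  rintro E ⟨μ, h0, h1, h2, rfl⟩
  refine ⟨μ, h0, fun x hx => h1 x fun hxA => hx (h hxA), ?_, ?_⟩
  · rw [← h2]
    exact (Finset.sum_subset h fun x _ hx => h1 x hx).symm
  · have : ∀ x, ∑ y ∈ A, green p lam x y * μ x * μ y = ∑ y ∈ B, green p lam x y * μ x * μ y :=
      fun x => Finset.sum_subset h fun y _ hy => by rw [h1 y hy, mul_zero]
    simp_rw [this]
    exact Finset.sum_subset h fun x _ hx => by simp [h1 x hx]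

lemma Ctx.mono (C : Ctx N w lam p) (A B : Finset V) (h : A ⊆ B) :
    ∑ x ∈ A, eqMeasure p lam (A : Set V) x ≤ ∑ x ∈ B, eqMeasure p lam (B : Set V) x := by
  rcases A.eq_empty_or_nonempty with rfl | hA
  · simp only [Finset.sum_empty]; exact Finset.sum_nonneg fun x hx => C.eq_nn B x hx
  · have hB := hA.mono h
    have := (C.isLeast B hB).2 (energies_mono A B h (C.isLeast A hA).1)
    exact (inv_le_inv₀ (C.cap_pos B hB) (C.cap_pos A hA)).1 this

end

end CapVar

/-- variational characterization of capacity,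
cap(A) = (inf over probability measures μ on A of the energy Σ g(x,y)μ(x)μ(y))⁻¹,
and the consequent monotonicity of capacity. -/
theorem capacity_variational_formula
    {V : Type*} (G : SimpleGraph V) [∀ v : V, Fintype (G.neighborSet v)] [Infinite V]
    (hconn : G.Connected)
    (w : V → V → ℝ) (lam : V → ℝ) (p : V → V → ℝ)
    (hw_symm : ∀ x y, w x y = w y x)
    (hw_nonneg : ∀ x y, 0 ≤ w x y)
    (hw_adj : ∀ x y, 0 < w x y ↔ G.Adj x y)
    (hlam : ∀ x, lam x = ∑ y ∈ G.neighborFinset x, w x y)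
    (hp : ∀ x y, p x y = w x y / lam x)
    (htrans : ∀ x y, Summable (fun n => nstep p n x y)) :
    (∀ A : Finset V,
      ∑ x ∈ A, eqMeasure p lam (↑A : Set V) x =
        (sInf {E : ℝ | ∃ μ : V → ℝ, (∀ x, 0 ≤ μ x) ∧ (∀ x, x ∉ A → μ x = 0) ∧
            (∑ x ∈ A, μ x = 1) ∧
            E = ∑ x ∈ A, ∑ y ∈ A, green p lam x y * μ x * μ y})⁻¹) ∧
    (∀ A B : Finset V, A ⊆ B →
      ∑ x ∈ A, eqMeasure p lam (↑A : Set V) x ≤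
        ∑ x ∈ B, eqMeasure p lam (↑B : Set V) x) := by
  have hw0 : ∀ x y, ¬ G.Adj x y → w x y = 0 := fun x y h =>
    le_antisymm (not_lt.1 fun h' => h ((hw_adj x y).1 h')) (hw_nonneg x y)
  have C : CapVar.Ctx (fun x => G.neighborFinset x) w lam p :=
    { hN := fun x y h => by
        rw [SimpleGraph.mem_neighborFinset] at h ⊢; exact h.symm
      wsymm := hw_symm
      wnn := hw_nonneg
      w0 := fun x y h => hw0 x y (by rwa [SimpleGraph.mem_neighborFinset] at h)
      hlam := hlam
      lampos := fun x => by
        obtain ⟨y, hy⟩ := hconn.preconnected.exists_adj_of_nontrivial x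
        rw [hlam]
        exact Finset.sum_pos' (fun z _ => hw_nonneg x z)
          ⟨y, (SimpleGraph.mem_neighborFinset ..).2 hy, (hw_adj x y).2 hy⟩
      hp := hp
      hs := htrans }
  exact ⟨fun A => C.main A, fun A B h => C.mono A B h⟩
end

section
/- Assume (p₀), (V_α), (G_β). Then there exist constants C > 0 and c > 0 such that for all x ∈ G and R > 0, P_x(T_{B(x,R)} > C·R^β) ≥ c. -/
open scoped ENNReal

lemma nstep_supp {V : Type*} (N : V → Finset V) (q : V → V → ℝ)
    (hq : ∀ a b, q a b ≠ 0 → b ∈ N a) (n : ℕ) (x : V) :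
    (Function.support (nstep q n x)).Finite := by
  classical
  induction n with
  | zero =>
    refine (Set.finite_singleton x).subset ?_
    intro y hy
    simp only [Function.mem_support, nstep] at hy
    by_contra h
    exact hy (if_neg (fun e => h (by simp [e])))
  | succ n ih =>
    refine (ih.biUnion (fun z _ => (N z).finite_toSet)).subset ?_
    intro y hy
    simp only [Function.mem_support, nstep] at hy
    have : ∃ z, nstep q n x z * q z y ≠ 0 := by
      by_contra! h
      exact hy (by simp [h])
    obtain ⟨z, hz⟩ := this
    simp only [Set.mem_iUnion]
    exact ⟨z, left_ne_zero_of_mul hz, hq _ _ (right_ne_zero_of_mul hz)⟩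

lemma nstep_succ' {V : Type*} (N : V → Finset V) (q : V → V → ℝ)
    (hq : ∀ a b, q a b ≠ 0 → b ∈ N a) (n : ℕ) (x y : V) :
    nstep q (n + 1) x y = ∑ u ∈ N x, q x u * nstep q n u y := by
  classical
  induction n generalizing y with
  | zero =>
    have h1 : nstep q (0 + 1) x y = q x y := by
      simp only [nstep]
      rw [tsum_eq_single x]
      · simp
      · intro z hz
        rw [if_neg (Ne.symm hz), zero_mul]
    rw [h1]
    simp only [nstep]
    by_cases hy : y ∈ N x
    · rw [Finset.sum_eq_single_of_mem y hy]
      · simp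
      · intro b _ hb
        simp [hb]
    · rw [Finset.sum_eq_zero]
      · by_contra h
        exact hy (hq _ _ h)
      · intro b hb
        have : b ≠ y := fun e => hy (e ▸ hb)
        simp [this]
  | succ n ih =>
    have h1 : nstep q (n + 1 + 1) x y = ∑' z, nstep q (n + 1) x z * q z y := rfl
    rw [h1]
    have h2 : ∀ z, nstep q (n + 1) x z * q z y
        = ∑ u ∈ N x, q x u * (nstep q n u z * q z y) := by
      intro z
      rw [ih, Finset.sum_mul]
      exact Finset.sum_congr rfl (fun u _ => by ring)
    simp_rw [h2]
    rw [Summable.tsum_finsetSum]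
    · refine Finset.sum_congr rfl (fun u _ => ?_)
      rw [tsum_mul_left]
      rfl
    · intro u _
      refine summable_of_hasFiniteSupport ((nstep_supp N q hq n u).subset ?_)
      intro z hz
      simp only [Function.mem_support] at hz ⊢
      intro h
      simp [h] at hz

lemma nstep_nonneg {V : Type*} (q : V → V → ℝ)
    (h0 : ∀ a b, 0 ≤ q a b) (n : ℕ) (x y : V) : 0 ≤ nstep q n x y := by
  classical
  induction n generalizing y with
  | zero =>
    simp only [nstep]
    split_ifs <;> norm_num
  | succ n ih =>
    simp only [nstep]
    exact tsum_nonneg (fun z => mul_nonneg (ih z) (h0 _ _))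

lemma mass_zero {V : Type*} (q : V → V → ℝ) (x : V) : ∑' y, nstep q 0 x y = 1 := by
  classical
  simp only [nstep]
  rw [tsum_eq_single x]
  · simp
  · intro z hz
    rw [if_neg (Ne.symm hz)]

lemma mass_succ {V : Type*} (N : V → Finset V) (q : V → V → ℝ)
    (hq : ∀ a b, q a b ≠ 0 → b ∈ N a) (n : ℕ) (x : V) :
    ∑' y, nstep q (n + 1) x y = ∑ u ∈ N x, q x u * ∑' y, nstep q n u y := by
  simp_rw [nstep_succ' N q hq n x]
  rw [Summable.tsum_finsetSum]
  · refine Finset.sum_congr rfl (fun u _ => ?_)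
    rw [tsum_mul_left]
  · intro u _
    exact (summable_of_hasFiniteSupport (nstep_supp N q hq n u)).mul_left _

lemma mass_nonneg {V : Type*} (q : V → V → ℝ)
    (h0 : ∀ a b, 0 ≤ q a b) (n : ℕ) (x : V) : 0 ≤ ∑' y, nstep q n x y :=
  tsum_nonneg (fun y => nstep_nonneg q h0 n x y)

lemma mass_le_one {V : Type*} (N : V → Finset V) (q : V → V → ℝ)
    (hq : ∀ a b, q a b ≠ 0 → b ∈ N a) (h0 : ∀ a b, 0 ≤ q a b)
    (h1 : ∀ a, ∑ b ∈ N a, q a b ≤ 1) (n : ℕ) (x : V) :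
    ∑' y, nstep q n x y ≤ 1 := by
  induction n generalizing x with
  | zero => rw [mass_zero]
  | succ n ih =>
    rw [mass_succ N q hq]
    refine le_trans (Finset.sum_le_sum (fun u _ => ?_)) (h1 x)
    exact mul_le_of_le_one_right (h0 _ _) (ih u)

/-- truncated Green sums -/
lemma trunc_succ {V : Type*} (N : V → Finset V) (q : V → V → ℝ)
    (hq : ∀ a b, q a b ≠ 0 → b ∈ N a) (K : ℕ) (x z : V) :
    ∑ m ∈ Finset.range (K + 1), nstep q m x z
      = nstep q 0 x z + ∑ u ∈ N x, q x u * ∑ m ∈ Finset.range K, nstep q m u z := by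
  rw [Finset.sum_range_succ', add_comm]
  congr 1
  simp_rw [Finset.mul_sum]
  rw [Finset.sum_comm]
  exact Finset.sum_congr rfl (fun m _ => nstep_succ' N q hq m x z)

lemma trunc_le_diag {V : Type*} (N : V → Finset V) (q : V → V → ℝ)
    (hq : ∀ a b, q a b ≠ 0 → b ∈ N a) (h0 : ∀ a b, 0 ≤ q a b)
    (h1 : ∀ a, ∑ b ∈ N a, q a b ≤ 1) (K : ℕ) (x z : V) :
    ∑ m ∈ Finset.range K, nstep q m x z ≤ ∑ m ∈ Finset.range K, nstep q m z z := by
  classical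
  induction K generalizing x with
  | zero => simp
  | succ K ih =>
    by_cases hxz : x = z
    · rw [hxz]
    · rw [trunc_succ N q hq K x]
      have e : nstep q 0 x z = 0 := by simp [nstep, hxz]
      rw [e, zero_add]
      have hn : 0 ≤ ∑ m ∈ Finset.range K, nstep q m z z :=
        Finset.sum_nonneg (fun m _ => nstep_nonneg q h0 m z z)
      calc ∑ u ∈ N x, q x u * ∑ m ∈ Finset.range K, nstep q m u z
          ≤ ∑ u ∈ N x, q x u * ∑ m ∈ Finset.range K, nstep q m z z :=
            Finset.sum_le_sum (fun u _ => mul_le_mul_of_nonneg_left (ih u) (h0 _ _))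
        _ = (∑ u ∈ N x, q x u) * ∑ m ∈ Finset.range K, nstep q m z z := by
            rw [Finset.sum_mul]
        _ ≤ ∑ m ∈ Finset.range K, nstep q m z z := mul_le_of_le_one_left hn (h1 x)
        _ ≤ _ := by
            rw [Finset.sum_range_succ]
            linarith [nstep_nonneg q h0 K z z]

lemma killed_ne {V : Type*} (N : V → Finset V) (p : V → V → ℝ)
    (hp : ∀ a b, p a b ≠ 0 → b ∈ N a) (U : Set V) :
    ∀ a b, killedKernel p U a b ≠ 0 → b ∈ N a := by
  classical
  intro a b h
  unfold killedKernel at h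
  split_ifs at h
  · exact hp _ _ h
  · exact absurd rfl h

lemma killed_nonneg {V : Type*} (p : V → V → ℝ) (h0 : ∀ a b, 0 ≤ p a b) (U : Set V) :
    ∀ a b, 0 ≤ killedKernel p U a b := by
  classical
  intro a b
  unfold killedKernel
  split_ifs
  · exact h0 _ _
  · exact le_rfl

lemma killed_le {V : Type*} (p : V → V → ℝ) (h0 : ∀ a b, 0 ≤ p a b) (U : Set V) :
    ∀ a b, killedKernel p U a b ≤ p a b := by
  classical
  intro a b
  unfold killedKernel
  split_ifs
  · exact le_rfl
  · exact h0 _ _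

lemma nstep_killed_le {V : Type*} (N : V → Finset V) (p : V → V → ℝ)
    (hp : ∀ a b, p a b ≠ 0 → b ∈ N a) (h0 : ∀ a b, 0 ≤ p a b) (U : Set V) (n : ℕ) (x y : V) :
    nstep (killedKernel p U) n x y ≤ nstep p n x y := by
  induction n generalizing x with
  | zero => exact le_rfl
  | succ n ih =>
    rw [nstep_succ' N _ (killed_ne N p hp U), nstep_succ' N _ hp]
    exact Finset.sum_le_sum (fun u _ => mul_le_mul (killed_le p h0 U _ _) (ih u)
      (nstep_nonneg _ (killed_nonneg p h0 U) _ _ _) (h0 _ _))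

lemma nstep_killed_out {V : Type*} (p : V → V → ℝ) (U : Set V) (n : ℕ) (x y : V)
    (hx : x ∈ U) (hy : y ∉ U) : nstep (killedKernel p U) n x y = 0 := by
  classical
  cases n with
  | zero =>
    have hne : x ≠ y := fun e => hy (e ▸ hx)
    simp [nstep, hne]
  | succ n =>
    simp [nstep, killedKernel, hy]

lemma mass_killed {V : Type*} (p : V → V → ℝ) (U : Set V) (hU : U.Finite) (n : ℕ) (x : V)
    (hx : x ∈ U) : ∑' y, nstep (killedKernel p U) n x y
      = ∑ y ∈ hU.toFinset, nstep (killedKernel p U) n x y := by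
  refine tsum_eq_sum (fun y hy => nstep_killed_out p U n x y hx ?_)
  simpa using hy

lemma trunc_killed_ge {V : Type*} (N : V → Finset V) (p : V → V → ℝ)
    (hp : ∀ a b, p a b ≠ 0 → b ∈ N a) (h0 : ∀ a b, 0 ≤ p a b)
    (h1 : ∀ a, ∑ b ∈ N a, p a b ≤ 1) (U : Set V) (z : V) (M : ℝ) (hM : 0 ≤ M)
    (hout : ∀ K : ℕ, ∀ y, y ∉ U → ∑ m ∈ Finset.range K, nstep p m y z ≤ M) (K : ℕ) (y : V) :
    ∑ m ∈ Finset.range K, nstep p m y z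
      ≤ ∑ m ∈ Finset.range K, nstep (killedKernel p U) m y z + M := by
  classical
  have hnn : ∀ K y, 0 ≤ ∑ m ∈ Finset.range K, nstep (killedKernel p U) m y z := fun K y =>
    Finset.sum_nonneg (fun m _ => nstep_nonneg _ (killed_nonneg p h0 U) m y z)
  induction K generalizing y with
  | zero => simpa using hM
  | succ K ih =>
    by_cases hy : y ∈ U
    · rw [trunc_succ N _ (killed_ne N p hp U), trunc_succ N p hp]
      have e : nstep (killedKernel p U) 0 y z = nstep p 0 y z := rfl
      rw [e, add_assoc]
      gcongr
      calc ∑ u ∈ N y, p y u * ∑ m ∈ Finset.range K, nstep p m u z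
          ≤ ∑ u ∈ N y, (killedKernel p U y u *
              ∑ m ∈ Finset.range K, nstep (killedKernel p U) m u z + p y u * M) := by
            refine Finset.sum_le_sum (fun u _ => ?_)
            by_cases hu : u ∈ U
            · have : killedKernel p U y u = p y u := by simp [killedKernel, hy, hu]
              rw [this, ← mul_add]
              exact mul_le_mul_of_nonneg_left (ih u) (h0 _ _)
            · have : killedKernel p U y u = 0 := by simp [killedKernel, hu]
              rw [this, zero_mul, zero_add]
              exact mul_le_mul_of_nonneg_left (hout K u hu) (h0 _ _)
        _ = ∑ u ∈ N y, killedKernel p U y u *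
              ∑ m ∈ Finset.range K, nstep (killedKernel p U) m u z + (∑ u ∈ N y, p y u) * M := by
            rw [Finset.sum_add_distrib, Finset.sum_mul]
        _ ≤ _ := by
            gcongr
            exact mul_le_of_le_one_left hM (h1 y)
    · linarith [hout (K + 1) y hy, hnn (K + 1) y]

lemma markov_bound {V : Type*} (N : V → Finset V) (p : V → V → ℝ)
    (hp : ∀ a b, p a b ≠ 0 → b ∈ N a) (h0 : ∀ a b, 0 ≤ p a b)
    (U : Set V) (M : ℝ) (K : ℕ)
    (hM : ∀ y ∈ U, ∑ m ∈ Finset.range K, ∑' z, nstep (killedKernel p U) m y z ≤ M)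
    (n : ℕ) (y : V) (hy : y ∈ U) :
    ∑ m ∈ Finset.range K, ∑' z, nstep (killedKernel p U) (n + m) y z
      ≤ M * ∑' z, nstep (killedKernel p U) n y z := by
  classical
  induction n generalizing y with
  | zero =>
    rw [mass_zero, mul_one]
    simpa using hM y hy
  | succ n ih =>
    have e : ∀ m, ∑' z, nstep (killedKernel p U) (n + 1 + m) y z
        = ∑ u ∈ N y, killedKernel p U y u * ∑' z, nstep (killedKernel p U) (n + m) u z := by
      intro m
      rw [← mass_succ N _ (killed_ne N p hp U), Nat.add_right_comm]
    simp_rw [e]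
    rw [Finset.sum_comm, mass_succ N _ (killed_ne N p hp U), Finset.mul_sum]
    refine Finset.sum_le_sum (fun u _ => ?_)
    rw [← Finset.mul_sum]
    by_cases hu : u ∈ U
    · calc _ ≤ killedKernel p U y u * (M * ∑' z, nstep (killedKernel p U) n u z) :=
            mul_le_mul_of_nonneg_left (ih u hu) (killed_nonneg p h0 U _ _)
        _ = _ := by ring
    · have : killedKernel p U y u = 0 := by simp [killedKernel, hu]
      simp [this]

lemma nstep_pos {V : Type*} (G : SimpleGraph V) (N : V → Finset V) (p : V → V → ℝ)
    (hp : ∀ a b, p a b ≠ 0 → b ∈ N a) (h0 : ∀ a b, 0 ≤ p a b)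
    (hadj : ∀ a b, G.Adj a b → 0 < p a b) {x y : V} (W : G.Walk x y) :
    ∃ n, 0 < nstep p n x y := by
  classical
  induction W with
  | nil => exact ⟨0, by simp [nstep]⟩
  | @cons a b c h W ih =>
    obtain ⟨n, hn⟩ := ih
    refine ⟨n + 1, ?_⟩
    rw [nstep_succ' N p hp]
    refine lt_of_lt_of_le (mul_pos (hadj a b h) hn) ?_
    exact Finset.single_le_sum (f := fun u => p a u * nstep p n u c)
      (fun u _ => mul_nonneg (h0 _ _) (nstep_nonneg p h0 _ _ _))
      (hp _ _ (hadj a b h).ne')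

set_option maxHeartbeats 2000000

/-- uniformly positive probability of staying in B(x,R) for C·R^β steps;
the survival probability P_x(T_{B(x,R)} > n) equals the total mass of the killed n-step kernel. -/
theorem exit_time_lower_bound
    {V : Type*} (G : SimpleGraph V) [∀ v : V, Fintype (G.neighborSet v)] [Infinite V]
    (hconn : G.Connected)
    (w : V → V → ℝ) (lam : V → ℝ) (p : V → V → ℝ) (d : V → V → ℝ)
    (hw_symm : ∀ x y, w x y = w y x)
    (hw_nonneg : ∀ x y, 0 ≤ w x y)
    (hw_adj : ∀ x y, 0 < w x y ↔ G.Adj x y)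
    (hlam : ∀ x, lam x = ∑ y ∈ G.neighborFinset x, w x y)
    (hp : ∀ x y, p x y = w x y / lam x)
    (htrans : ∀ x y, Summable (fun n => nstep p n x y))
    (c₀ : ℝ) (hc₀ : 0 < c₀) (hp₀ : ∀ x y, G.Adj x y → c₀ ≤ p x y)
    (hd_symm : ∀ x y, d x y = d y x)
    (hd_self : ∀ x, d x x = 0)
    (hd_nonneg : ∀ x y, 0 ≤ d x y)
    (hd_tri : ∀ x y z, d x z ≤ d x y + d y z)
    (hBfin : ∀ (x : V) (L : ℝ), {y | d x y ≤ L}.Finite)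
    (α β : ℝ) (hα : 2 < α) (hβ₂ : 2 ≤ β) (hβα : β < α)
    (cV CV : ℝ) (hcV : 0 < cV)
    (hVol : ∀ (x : V) (L : ℝ), 1 ≤ L →
      cV * L ^ α ≤ ∑ y ∈ (hBfin x L).toFinset, lam y ∧
        ∑ y ∈ (hBfin x L).toFinset, lam y ≤ CV * L ^ α)
    (cg Cg : ℝ) (hcg : 0 < cg)
    (hGdiag : ∀ x : V, cg ≤ green p lam x x ∧ green p lam x x ≤ Cg)
    (hGoff : ∀ x y : V, x ≠ y →
      cg * d x y ^ (-(α - β)) ≤ green p lam x y ∧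
        green p lam x y ≤ Cg * d x y ^ (-(α - β))) :
    ∃ C c : ℝ, 0 < C ∧ 0 < c ∧ ∀ (x : V) (R : ℝ), 0 < R →
      c ≤ ∑' y : V, nstep (killedKernel p {v | d x v ≤ R}) ⌊C * R ^ β⌋₊ x y := by
  classical
  set a : ℝ := α - β with ha_def
  have ha : 0 < a := by rw [ha_def]; linarith
  obtain ⟨o⟩ : Nonempty V := hconn.nonempty
  have hCg : 0 < Cg := lt_of_lt_of_le hcg ((hGdiag o).1.trans (hGdiag o).2)
  have hcgCg : cg ≤ Cg := (hGdiag o).1.trans (hGdiag o).2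
  have hCV : 0 < CV := by
    have := hVol o 1 le_rfl
    simp only [Real.one_rpow, mul_one] at this
    linarith [this.1, this.2]
  have hlam_pos : ∀ x, 0 < lam x := by
    intro x
    have h1 : 0 ≤ lam x := by
      rw [hlam]; exact Finset.sum_nonneg (fun y _ => hw_nonneg x y)
    refine lt_of_le_of_ne h1 (fun h => ?_)
    have := (hGdiag x).1
    simp only [green, ← h, div_zero, zero_mul] at this
    linarith
  have hp_nonneg : ∀ x y, 0 ≤ p x y := fun x y => by
    rw [hp]; exact div_nonneg (hw_nonneg _ _) (hlam_pos x).le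
  set N : V → Finset V := fun x => G.neighborFinset x with hN
  have hpN : ∀ x y, p x y ≠ 0 → y ∈ N x := by
    intro x y h
    rw [hN]
    simp only [SimpleGraph.mem_neighborFinset]
    rw [← hw_adj]
    refine lt_of_le_of_ne (hw_nonneg x y) (fun e => h ?_)
    rw [hp, ← e, zero_div]
  have hrow : ∀ x, ∑ y ∈ N x, p x y ≤ 1 := by
    intro x
    simp_rw [hp]
    rw [← Finset.sum_div, ← hlam, div_self (hlam_pos x).ne']
  have hadj : ∀ x y, G.Adj x y → 0 < p x y := fun x y h => hc₀.trans_le (hp₀ x y h)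
  have hgl : ∀ x y, lam y * green p lam x y = ∑' n, nstep p n x y := by
    intro x y
    unfold green
    have := (hlam_pos y).ne'
    field_simp
  have htr_le : ∀ K x y, ∑ m ∈ Finset.range K, nstep p m x y ≤ lam y * green p lam x y := by
    intro K x y
    rw [hgl]
    exact (htrans x y).sum_le_tsum _ (fun m _ => nstep_nonneg p hp_nonneg m x y)
  have hgpos : ∀ x y, 0 < green p lam x y := by
    intro x y
    obtain ⟨W⟩ := hconn.preconnected x y
    obtain ⟨n, hn⟩ := nstep_pos G N p hpN hp_nonneg hadj W
    have h1 : nstep p n x y ≤ lam y * green p lam x y := by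
      rw [hgl]
      exact (htrans x y).le_tsum n (fun m _ => nstep_nonneg p hp_nonneg m x y)
    exact pos_of_mul_pos_right (hn.trans_le h1) (hlam_pos y).le
  have hdpos : ∀ x y, x ≠ y → 0 < d x y := by
    intro x y hxy
    refine lt_of_le_of_ne (hd_nonneg x y) (fun e => ?_)
    have h1 := (hGoff x y hxy).2
    rw [← e, Real.zero_rpow (by linarith), mul_zero] at h1
    linarith [hgpos x y]
  have hgle : ∀ x y, green p lam x y ≤ Cg := by
    intro x y
    refine le_trans ?_ (hGdiag y).2
    have h1 : lam y * green p lam x y ≤ lam y * green p lam y y := by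
      rw [hgl, hgl]
      refine le_of_tendsto_of_tendsto' (htrans x y).hasSum.tendsto_sum_nat
        (htrans y y).hasSum.tendsto_sum_nat (fun K => ?_)
      exact trunc_le_diag N p hpN hp_nonneg hrow K x y
    exact le_of_mul_le_mul_left h1 (hlam_pos y)
  -- upper bound on Green sums over balls
  set F : V → ℝ → ℝ := fun y L => ∑ z ∈ (hBfin y L).toFinset, lam z * green p lam y z with hF
  have hterm : ∀ y z, 0 ≤ lam z * green p lam y z := fun y z =>
    (mul_pos (hlam_pos z) (hgpos y z)).le
  have hFmono : ∀ y L L', L ≤ L' → F y L ≤ F y L' := by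
    intro y L L' h
    refine Finset.sum_le_sum_of_subset_of_nonneg ?_ (fun z _ _ => hterm y z)
    intro z hz
    simp only [Set.Finite.mem_toFinset, Set.mem_ofPred_eq] at hz ⊢
    linarith
  set Kc : ℝ := Cg * CV * 2 ^ α with hKc
  have h2α : (1 : ℝ) ≤ 2 ^ α := Real.one_le_rpow (by norm_num) (by linarith)
  have hKc_pos : 0 < Kc := by positivity
  have hF1 : ∀ y, F y 1 ≤ Kc := by
    intro y
    have hv := (hVol y 1 le_rfl).2
    rw [Real.one_rpow, mul_one] at hv
    calc F y 1 ≤ ∑ z ∈ (hBfin y 1).toFinset, lam z * Cg :=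
          Finset.sum_le_sum (fun z _ => mul_le_mul_of_nonneg_left (hgle y z) (hlam_pos z).le)
      _ = (∑ z ∈ (hBfin y 1).toFinset, lam z) * Cg := by rw [Finset.sum_mul]
      _ ≤ CV * Cg := by gcongr
      _ ≤ Kc := by rw [hKc]; nlinarith [mul_pos hCg hCV]
  have hFstep : ∀ y L, 1 ≤ L → F y (2 * L) ≤ F y L + Kc * L ^ β := by
    intro y L hL
    have hL0 : 0 < L := by linarith
    have hsub : (hBfin y L).toFinset ⊆ (hBfin y (2 * L)).toFinset := by
      intro z hz
      simp only [Set.Finite.mem_toFinset, Set.mem_ofPred_eq] at hz ⊢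
      linarith
    have h1 : F y (2 * L) = ∑ z ∈ (hBfin y (2 * L)).toFinset \ (hBfin y L).toFinset,
        lam z * green p lam y z + F y L := (Finset.sum_sdiff hsub).symm
    have hv := (hVol y (2 * L) (by linarith)).2
    have hLa : 0 ≤ Cg * L ^ (-a) := by positivity
    have h2 : ∑ z ∈ (hBfin y (2 * L)).toFinset \ (hBfin y L).toFinset,
        lam z * green p lam y z ≤ Kc * L ^ β := by
      calc _ ≤ ∑ z ∈ (hBfin y (2 * L)).toFinset \ (hBfin y L).toFinset,
            lam z * (Cg * L ^ (-a)) := by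
            refine Finset.sum_le_sum (fun z hz => ?_)
            refine mul_le_mul_of_nonneg_left ?_ (hlam_pos z).le
            simp only [Finset.mem_sdiff, Set.Finite.mem_toFinset, Set.mem_ofPred_eq, not_le] at hz
            have hyz : y ≠ z := by
              rintro rfl
              rw [hd_self] at hz
              linarith [hz.2]
            refine (hGoff y z hyz).2.trans (mul_le_mul_of_nonneg_left ?_ hCg.le)
            exact Real.rpow_le_rpow_of_nonpos hL0 hz.2.le (by linarith)
        _ ≤ ∑ z ∈ (hBfin y (2 * L)).toFinset, lam z * (Cg * L ^ (-a)) :=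
            Finset.sum_le_sum_of_subset_of_nonneg Finset.sdiff_subset
              (fun z _ _ => mul_nonneg (hlam_pos z).le hLa)
        _ = (∑ z ∈ (hBfin y (2 * L)).toFinset, lam z) * (Cg * L ^ (-a)) := by
            rw [Finset.sum_mul]
        _ ≤ (CV * (2 * L) ^ α) * (Cg * L ^ (-a)) := by gcongr
        _ = Kc * (L ^ α * L ^ (-a)) := by
            rw [Real.mul_rpow (by norm_num) hL0.le, hKc]; ring
        _ = Kc * L ^ β := by
            rw [← Real.rpow_add hL0]
            congr 2
            rw [ha_def]; ring
    linarith
  have hFpow : ∀ y (k : ℕ), F y (2 ^ k) ≤ Kc * ((2 : ℝ) ^ k) ^ β := by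
    intro y k
    induction k with
    | zero => simpa using hF1 y
    | succ k ih =>
      have hk1 : (1 : ℝ) ≤ 2 ^ k := one_le_pow₀ (by norm_num)
      have h2 : ((2 : ℝ) ^ (k + 1)) = 2 * 2 ^ k := by ring
      rw [h2]
      have h3 := hFstep y (2 ^ k) hk1
      rw [Real.mul_rpow (by norm_num) (by positivity)]
      have h4 : (2 : ℝ) ≤ 2 ^ β := by
        calc (2 : ℝ) = 2 ^ (1 : ℝ) := (Real.rpow_one 2).symm
          _ ≤ 2 ^ β := Real.rpow_le_rpow_of_exponent_le (by norm_num) (by linarith)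
      have h5 : 0 < Kc * ((2 : ℝ) ^ k) ^ β := by positivity
      nlinarith
  have hFtop : ∀ y R, 1 ≤ R → F y (2 * R) ≤ Kc * 4 ^ β * R ^ β := by
    intro y R hR
    obtain ⟨k, hk1, hk2⟩ := exists_nat_pow_near (x := 2 * R) (y := (2 : ℝ))
      (by linarith) (by norm_num)
    have h1 : (2 : ℝ) ^ (k + 1) ≤ 4 * R := by rw [pow_succ]; linarith
    calc F y (2 * R) ≤ F y (2 ^ (k + 1)) := hFmono _ _ _ hk2.le
      _ ≤ Kc * ((2 : ℝ) ^ (k + 1)) ^ β := hFpow y (k + 1)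
      _ ≤ Kc * (4 * R) ^ β := by
          gcongr
      _ = Kc * 4 ^ β * R ^ β := by
          rw [Real.mul_rpow (by norm_num) (by linarith)]; ring
  -- constants
  set t : ℝ := (cg / (2 * Cg)) ^ (1 / a) with ht
  have hr0 : 0 < cg / (2 * Cg) := by positivity
  have ht0 : 0 < t := Real.rpow_pos_of_pos hr0 _
  have ht1 : t ≤ 1 := by
    refine Real.rpow_le_one hr0.le ?_ (by positivity)
    rw [div_le_one (by positivity)]
    linarith
  have hta : t ^ (-a) = 2 * Cg / cg := by
    rw [ht, ← Real.rpow_mul hr0.le]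
    have : 1 / a * -a = -1 := by field_simp
    rw [this, Real.rpow_neg_one, inv_div]
  set ε : ℝ := t / 2 with hε
  have hε0 : 0 < ε := by positivity
  have hε1 : ε ≤ 1 / 2 := by rw [hε]; linarith
  set c1 : ℝ := Cg * 2 ^ a * cV * ε ^ α with hc1
  have hc1_pos : 0 < c1 := by positivity
  set C2 : ℝ := Kc * 4 ^ β with hC2
  have hC2_pos : 0 < C2 := by positivity
  refine ⟨min (c1 / 2) (ε ^ β / 2), min 1 (c1 / (2 * C2)), by positivity, by positivity, ?_⟩
  intro x R hR
  set C : ℝ := min (c1 / 2) (ε ^ β / 2) with hC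
  have hC0 : 0 < C := by positivity
  by_cases hεR : ε * R < 1
  · have h1 : C * R ^ β < 1 := by
      calc C * R ^ β ≤ ε ^ β / 2 * R ^ β := by
            gcongr
            exact min_le_right _ _
        _ = (ε * R) ^ β / 2 := by rw [Real.mul_rpow hε0.le hR.le]; ring
        _ ≤ 1 / 2 := by
            gcongr
            exact Real.rpow_le_one (by positivity) hεR.le (by linarith)
        _ < 1 := by norm_num
    rw [Nat.floor_eq_zero.mpr h1, mass_zero]
    exact min_le_left _ _
  push Not at hεR
  have hR1 : 1 ≤ R := by nlinarith
  set U : Set V := {v | d x v ≤ R} with hU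
  have hxU : x ∈ U := by
    rw [hU]; simp only [Set.mem_ofPred_eq, hd_self]; exact hR.le
  set n : ℕ := ⌊C * R ^ β⌋₊ with hn
  have hRβ : 0 < R ^ β := by positivity
  have hnle : (n : ℝ) ≤ c1 / 2 * R ^ β := by
    calc (n : ℝ) ≤ C * R ^ β := Nat.floor_le (by positivity)
      _ ≤ _ := by
          gcongr
          exact min_le_left _ _
  set q := killedKernel p U with hq
  have hqN := killed_ne N p hpN U
  have hq0 := killed_nonneg p hp_nonneg U
  have hqrow : ∀ a, ∑ b ∈ N a, q a b ≤ 1 := fun a =>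
    (Finset.sum_le_sum (fun b _ => killed_le p hp_nonneg U a b)).trans (hrow a)
  have hup : ∀ K : ℕ, ∀ y ∈ U, ∑ m ∈ Finset.range K, ∑' z, nstep q m y z ≤ C2 * R ^ β := by
    intro K y hy
    simp_rw [hq, mass_killed p U (hBfin x R) _ y hy]
    rw [Finset.sum_comm]
    calc _ ≤ ∑ z ∈ (hBfin x R).toFinset, lam z * green p lam y z := by
          refine Finset.sum_le_sum (fun z _ => le_trans ?_ (htr_le K y z))
          exact Finset.sum_le_sum (fun m _ => nstep_killed_le N p hpN hp_nonneg U m y z)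
      _ ≤ F y (2 * R) := by
          refine Finset.sum_le_sum_of_subset_of_nonneg ?_ (fun z _ _ => hterm y z)
          intro z hz
          simp only [Set.Finite.mem_toFinset, Set.mem_ofPred_eq] at hz ⊢
          have hy' : d x y ≤ R := hy
          linarith [hd_tri y x z, hd_symm x y]
      _ ≤ _ := hFtop y R hR1
  set f : ℝ := ∑' y, nstep q n x y with hf
  have htot : ∀ K : ℕ, ∑ m ∈ Finset.range K, ∑' z, nstep q m x z ≤ n + C2 * R ^ β * f := by
    intro K
    calc _ ≤ ∑ m ∈ Finset.range (n + K), ∑' z, nstep q m x z := by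
          refine Finset.sum_le_sum_of_subset_of_nonneg ?_ (fun m _ _ => mass_nonneg q hq0 m x)
          exact Finset.range_mono (by omega)
      _ = ∑ m ∈ Finset.range n, ∑' z, nstep q m x z
          + ∑ m ∈ Finset.range K, ∑' z, nstep q (n + m) x z := Finset.sum_range_add _ n K
      _ ≤ ∑ m ∈ Finset.range n, (1 : ℝ) + C2 * R ^ β * f := by
          refine add_le_add (Finset.sum_le_sum (fun m _ => ?_)) ?_
          · exact mass_le_one N q hqN hq0 hqrow m x
          · exact markov_bound N p hpN hp_nonneg U _ K (hup K) n x hxU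
      _ = _ := by simp
  set A : Finset V := (hBfin x (ε * R)).toFinset with hA
  have hAU : A ⊆ (hBfin x R).toFinset := by
    intro z hz
    simp only [hA, Set.Finite.mem_toFinset, Set.mem_ofPred_eq] at hz ⊢
    nlinarith
  set mm : ℝ := Cg * (R / 2) ^ (-a) with hmm
  have hmm0 : 0 < mm := by positivity
  have hcmp : ∀ K : ℕ, ∀ z ∈ A, ∑ m ∈ Finset.range K, nstep p m x z
      ≤ ∑ m ∈ Finset.range K, nstep q m x z + lam z * mm := by
    intro K z hz
    refine trunc_killed_ge N p hpN hp_nonneg hrow U z (lam z * mm)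
      (mul_pos (hlam_pos z) hmm0).le ?_ K x
    intro K y hy
    refine (htr_le K y z).trans (mul_le_mul_of_nonneg_left ?_ (hlam_pos z).le)
    have hz' : d x z ≤ ε * R := by simpa [hA] using hz
    have hy' : R < d x y := by simpa [hU] using hy
    have hyz : R / 2 ≤ d y z := by
      have := hd_tri x z y
      rw [hd_symm z y] at this
      nlinarith
    have hne : y ≠ z := by
      rintro rfl
      rw [hd_self] at hyz
      linarith
    refine (hGoff y z hne).2.trans (mul_le_mul_of_nonneg_left ?_ hCg.le)
    exact Real.rpow_le_rpow_of_nonpos (by linarith) hyz (by linarith)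
  have hsumK : ∀ K : ℕ, ∑ z ∈ A, ∑ m ∈ Finset.range K, nstep p m x z
      ≤ n + C2 * R ^ β * f + ∑ z ∈ A, lam z * mm := by
    intro K
    calc _ ≤ ∑ z ∈ A, (∑ m ∈ Finset.range K, nstep q m x z + lam z * mm) :=
          Finset.sum_le_sum (hcmp K)
      _ = ∑ z ∈ A, ∑ m ∈ Finset.range K, nstep q m x z + ∑ z ∈ A, lam z * mm :=
          Finset.sum_add_distrib
      _ ≤ _ := by
          gcongr
          refine le_trans ?_ (htot K)
          rw [Finset.sum_comm]
          refine Finset.sum_le_sum (fun m _ => ?_)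
          rw [hq, mass_killed p U (hBfin x R) _ x hxU]
          exact Finset.sum_le_sum_of_subset_of_nonneg hAU
            (fun z _ _ => nstep_nonneg _ hq0 m x z)
  have hlim : ∑ z ∈ A, lam z * green p lam x z
      ≤ n + C2 * R ^ β * f + ∑ z ∈ A, lam z * mm := by
    simp_rw [hgl]
    refine le_of_tendsto' (tendsto_finsetSum A
      (fun z _ => (htrans x z).hasSum.tendsto_sum_nat)) hsumK
  have hglow : ∀ z ∈ A, 2 * mm ≤ green p lam x z := by
    intro z hz
    have hz' : d x z ≤ ε * R := by simpa [hA] using hz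
    have h1 : cg * (ε * R) ^ (-a) = 2 * mm := by
      have : ε * R = t * (R / 2) := by rw [hε]; ring
      rw [this, Real.mul_rpow ht0.le (by linarith), hta, hmm]
      field_simp
    rw [← h1]
    by_cases hxz : x = z
    · subst hxz
      refine le_trans ?_ (hGdiag x).1
      refine mul_le_of_le_one_right hcg.le ?_
      exact Real.rpow_le_one_of_one_le_of_nonpos hεR (by linarith)
    · refine le_trans (mul_le_mul_of_nonneg_left ?_ hcg.le) (hGoff x z hxz).1
      exact Real.rpow_le_rpow_of_nonpos (hdpos x z hxz) hz' (by linarith)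
  have hlow : 2 * ∑ z ∈ A, lam z * mm ≤ ∑ z ∈ A, lam z * green p lam x z := by
    rw [Finset.mul_sum]
    refine Finset.sum_le_sum (fun z hz => ?_)
    have h1 := mul_le_mul_of_nonneg_left (hglow z hz) (hlam_pos z).le
    calc 2 * (lam z * mm) = lam z * (2 * mm) := by ring
      _ ≤ _ := h1
  have hvol : c1 * R ^ β ≤ ∑ z ∈ A, lam z * mm := by
    rw [← Finset.sum_mul]
    have hv := (hVol x (ε * R) hεR).1
    calc c1 * R ^ β = cV * (ε * R) ^ α * mm := by
          have e1 : R ^ β = R ^ α * R ^ (-a) := by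
            rw [← Real.rpow_add hR]
            congr 1
            rw [ha_def]; ring
          have e2 : (R / 2) ^ (-a) = R ^ (-a) * 2 ^ a := by
            rw [Real.div_rpow hR.le (by norm_num), Real.rpow_neg (by norm_num : (0:ℝ) ≤ 2),
              div_inv_eq_mul]
          rw [hc1, hmm, e1, e2, Real.mul_rpow hε0.le hR.le]
          ring
      _ ≤ _ := by gcongr
  have hfin : c1 / 2 * R ^ β ≤ C2 * R ^ β * f := by linarith
  refine (min_le_right _ _).trans ?_
  rw [div_le_iff₀ (by positivity)]
  have : c1 / 2 ≤ C2 * f := by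
    refine le_of_mul_le_mul_right ?_ hRβ
    linarith
  linarith
end
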